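/- Let n ≥ 2 and k ≥ 1. Then every R-module homomorphism φ : m^k → R/m^k maps every homogeneous polynomial of degree k into the image of m^{k−1} in R/m^k. Consequently, restriction to the degree-k component defines a ℂ-linear isomorphism Hom_R(m^k, R/m^k) ≅ Hom_ℂ(R_k, m^{k−1}/m^k), and m^{k−1}/m^k is ℂ-linearly isomorphic to R_{k−1}, so that Hom_R(m^k, R/m^k) ≅ Hom_ℂ(R_k, R_{k−1}) as ℂ-vector spaces. -/

import Mathlib

open MvPolynomial

noncomputable section

/-- `R n = ℂ[x_1, …, x_n]`. -/
abbrev R (n : ℕ) : Type := MvPolynomial (Fin n) ℂ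

/-- `m = (x_1, …, x_n)`, the ideal generated by the variables. -/
def mId (n : ℕ) : Ideal (R n) := Ideal.span (Set.range MvPolynomial.X)

/-- `R_d`, the ℂ-subspace of homogeneous polynomials of degree `d`. -/
def Rdeg (n d : ℕ) : Submodule ℂ (R n) := homogeneousSubmodule (Fin n) ℂ d

/-- The ℂ-vector space `m^{k-1}/m^k`. -/
def Qmod (n k : ℕ) : Type :=
  ↥((mId n ^ (k - 1)).restrictScalars ℂ) ⧸
    Submodule.comap ((mId n ^ (k - 1)).restrictScalars ℂ).subtype
      ((mId n ^ k).restrictScalars ℂ)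

instance (n k : ℕ) : AddCommGroup (Qmod n k) := by unfold Qmod; infer_instance
instance (n k : ℕ) : Module ℂ (Qmod n k) := by unfold Qmod; infer_instance

/-- The canonical ℂ-linear map `m^{k-1}/m^k → R/m^k`. -/
def iota (n k : ℕ) : Qmod n k →ₗ[ℂ] (R n ⧸ mId n ^ k) :=
  Submodule.liftQ _
    ((Ideal.Quotient.mkₐ ℂ (mId n ^ k)).toLinearMap ∘ₗ
      ((mId n ^ (k - 1)).restrictScalars ℂ).subtype)
    (by
      intro x hx
      simp only [LinearMap.mem_ker, LinearMap.comp_apply, Submodule.coe_subtype,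
        AlgHom.toLinearMap_apply, Ideal.Quotient.mkₐ_eq_mk]
      exact Ideal.Quotient.eq_zero_iff_mem.2 hx)

/-! The relation `X j * x^(a + eᵢ) = X i * x^(a + eⱼ)` in `m^k` forces `X j * g ≡ X i * h` modulo
`m^(l+1)` for any lifts `g`, `h` of the images of the two monomials under an `R`-linear map
`φ : m^k → R/m^(l+1)`. Comparing coefficients of degree at most `l` moves a unit of the exponent
from the `i`-th to the `j`-th variable, in the source monomial and in the coefficient of its image
simultaneously. If `c` has degree `< l ≤ k`, it is smaller than the source exponent in some
coordinate `i`; after `c i` such moves the next one shows that the coefficient vanishes. Hence `φ`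
lands in `m^l/m^(l+1)`, which is killed by `m`, so that `φ` amounts to a linear map on
`m^k/m^(k+1) ≅ R_k`. -/

section PowIdealOfVars

section Semiring

variable {σ A : Type*} [CommSemiring A] {k : ℕ}

lemma homogeneousSubmodule_le_pow_idealOfVars (k : ℕ) :
    homogeneousSubmodule σ A k ≤ (idealOfVars σ A ^ k).restrictScalars A := by
  intro f hf
  rw [Submodule.restrictScalars_mem, mem_pow_idealOfVars_iff']
  intro c hc
  rw [mem_homogeneousSubmodule] at hf
  exact hf.coeff_eq_zero hc.ne

lemma mem_pow_succ_idealOfVars_iff_homogeneousComponent_eq_zero {p : MvPolynomial σ A}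
    (hp : p ∈ idealOfVars σ A ^ k) :
    p ∈ idealOfVars σ A ^ (k + 1) ↔ homogeneousComponent k p = 0 := by
  rw [mem_pow_idealOfVars_iff'] at hp ⊢
  simp only [MvPolynomial.ext_iff, coeff_homogeneousComponent, coeff_zero, ite_eq_right_iff]
  refine forall_congr' fun c => ⟨fun h hc => h (by omega), fun h hc => ?_⟩
  rcases Nat.lt_succ_iff_lt_or_eq.1 hc with hlt | heq
  exacts [hp c hlt, h heq]

lemma pow_idealOfVars_hom_ext {M : Type*} [AddCommMonoid M] [Module (MvPolynomial σ A) M]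
    {φ ψ : ↥(idealOfVars σ A ^ k) →ₗ[MvPolynomial σ A] M}
    (h : ∀ (a : σ →₀ ℕ) (ha : monomial a 1 ∈ idealOfVars σ A ^ k), a.degree = k →
      φ ⟨monomial a 1, ha⟩ = ψ ⟨monomial a 1, ha⟩) :
    φ = ψ := by
  rw [Submodule.linearMap_eq_iff_of_eq_span φ ψ (pow_idealOfVars_eq_span k)]
  rintro ⟨_, a, ha, rfl⟩
  exact h a _ ha

end Semiring

variable {σ A : Type*} [CommRing A] {k l : ℕ}

lemma mul_sub_constantCoeff_smul_mem_pow_idealOfVars (r : MvPolynomial σ A) {p : MvPolynomial σ A}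
    (hp : p ∈ idealOfVars σ A ^ k) :
    r * p - constantCoeff r • p ∈ idealOfVars σ A ^ (k + 1) := by
  have hr : r - C (constantCoeff r) ∈ idealOfVars σ A := by
    rw [← pow_one (idealOfVars σ A), mem_pow_idealOfVars_iff']
    intro c hc
    obtain rfl : c = 0 := by rwa [Nat.lt_one_iff, Finsupp.degree_eq_zero_iff] at hc
    rw [coeff_sub, coeff_zero_C, constantCoeff_eq, sub_self]
  rw [smul_eq_C_mul, ← sub_mul, pow_succ']
  exact Ideal.mul_mem_mul hr hp

lemma homogeneousComponent_mul_of_mem_pow_idealOfVars (r : MvPolynomial σ A)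
    {p : MvPolynomial σ A} (hp : p ∈ idealOfVars σ A ^ k) :
    homogeneousComponent k (r * p) = constantCoeff r • homogeneousComponent k p := by
  have hmem := mul_sub_constantCoeff_smul_mem_pow_idealOfVars r hp
  rw [mem_pow_succ_idealOfVars_iff_homogeneousComponent_eq_zero
    (Ideal.pow_le_pow_right k.le_succ hmem), map_sub, map_smul] at hmem
  exact sub_eq_zero.1 hmem

lemma mul_sub_mul_mem_of_smul_eq_smul {B M : Type*} [CommRing B] [AddCommMonoid M] [Module B M]
    {J : Ideal B} (φ : M →ₗ[B] B ⧸ J) {r s g h : B} {x y : M} (hxy : r • x = s • y)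
    (hg : Ideal.Quotient.mk J g = φ x) (hh : Ideal.Quotient.mk J h = φ y) :
    r * g - s * h ∈ J := by
  rw [← Ideal.Quotient.eq]
  calc Ideal.Quotient.mk J (r * g) = r • Ideal.Quotient.mk J g := rfl
    _ = s • Ideal.Quotient.mk J h := by rw [hg, hh, ← map_smul, ← map_smul, hxy]
    _ = Ideal.Quotient.mk J (s * h) := rfl

lemma coeff_eq_coeff_X_mul_of_mk_eq_map_monomial
    (φ : ↥(idealOfVars σ A ^ k) →ₗ[MvPolynomial σ A] MvPolynomial σ A ⧸ idealOfVars σ A ^ (l + 1))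
    {i j : σ} {a c : σ →₀ ℕ} (hcl : c.degree < l) {x y : ↥(idealOfVars σ A ^ k)}
    (hx : (x : MvPolynomial σ A) = monomial (a + Finsupp.single i 1) 1)
    (hy : (y : MvPolynomial σ A) = monomial (a + Finsupp.single j 1) 1)
    {g h : MvPolynomial σ A} (hg : Ideal.Quotient.mk _ g = φ x)
    (hh : Ideal.Quotient.mk _ h = φ y) :
    coeff c g = coeff (Finsupp.single j 1 + c) (X i * h) := by
  have hxy : (X j : MvPolynomial σ A) • x = (X i : MvPolynomial σ A) • y := by
    ext1
    simp only [Submodule.coe_smul, smul_eq_mul, hx, hy, monomial_add_single]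
    ring
  have hgh : X j * g - X i * h ∈ idealOfVars σ A ^ (l + 1) :=
    mul_sub_mul_mem_of_smul_eq_smul φ hxy hg hh
  rw [mem_pow_idealOfVars_iff'] at hgh
  have hcoeff := hgh (Finsupp.single j 1 + c) (by rw [map_add, Finsupp.degree_single]; omega)
  rwa [coeff_sub, coeff_X_mul, sub_eq_zero] at hcoeff

lemma coeff_eq_zero_of_mk_eq_map_monomial
    (φ : ↥(idealOfVars σ A ^ k) →ₗ[MvPolynomial σ A] MvPolynomial σ A ⧸ idealOfVars σ A ^ (l + 1))
    {i j : σ} (hij : i ≠ j) {a c : σ →₀ ℕ} (hak : a.degree = k) (hcl : c.degree < l)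
    (hca : c i < a i) {x : ↥(idealOfVars σ A ^ k)} (hx : (x : MvPolynomial σ A) = monomial a 1)
    {g : MvPolynomial σ A} (hg : Ideal.Quotient.mk _ g = φ x) : coeff c g = 0 := by
  classical
  induction hn : c i using Nat.strong_induction_on generalizing a c x g with
  | _ n ih =>
  obtain ⟨a, rfl⟩ : ∃ b, a = b + Finsupp.single i 1 :=
    le_iff_exists_add'.1 (Finsupp.single_le_iff.2 (by omega))
  have hak' : (a + Finsupp.single j 1).degree = k := by simpa using hak
  let y : ↥(idealOfVars σ A ^ k) := ⟨monomial (a + Finsupp.single j 1) 1,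
    homogeneousSubmodule_le_pow_idealOfVars k (isHomogeneous_monomial 1 hak')⟩
  obtain ⟨h, hh⟩ := Ideal.Quotient.mk_surjective (φ y)
  rw [coeff_eq_coeff_X_mul_of_mk_eq_map_monomial φ hcl hx rfl hg hh]
  rcases Nat.eq_zero_or_pos (c i) with hci | hci
  · have hi : i ∉ (Finsupp.single j 1 + c).support := by simp [hci, hij.symm]
    rw [coeff_X_mul', if_neg hi]
  · obtain ⟨c, rfl⟩ : ∃ d, c = d + Finsupp.single i 1 :=
      le_iff_exists_add'.1 (Finsupp.single_le_iff.2 hci)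
    have hshift : Finsupp.single j 1 + (c + Finsupp.single i 1) =
        Finsupp.single i 1 + (c + Finsupp.single j 1) := by abel
    have hcl' : (c + Finsupp.single j 1).degree < l := by simpa using hcl
    have hj : Finsupp.single j 1 i = 0 := Finsupp.single_eq_of_ne hij
    simp only [Finsupp.add_apply, Finsupp.single_eq_same] at hn hca
    rw [hshift, coeff_X_mul]
    refine ih (c i) (by omega) hak' hcl' ?_ (x := y) rfl hh ?_ <;>
      simp only [Finsupp.add_apply] <;> omega

lemma range_le_map_mkQ_pow_idealOfVars [Nontrivial σ] (hlk : l ≤ k)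
    (φ : ↥(idealOfVars σ A ^ k) →ₗ[MvPolynomial σ A]
      MvPolynomial σ A ⧸ idealOfVars σ A ^ (l + 1)) :
    LinearMap.range φ ≤
      Submodule.map (Submodule.mkQ (idealOfVars σ A ^ (l + 1))) (idealOfVars σ A ^ l) := by
  rw [← Submodule.ker_mkQ (Submodule.map _ _), LinearMap.range_le_ker_iff]
  refine pow_idealOfVars_hom_ext fun a ha hak => ?_
  obtain ⟨g, hg⟩ := Ideal.Quotient.mk_surjective (φ ⟨monomial a 1, ha⟩)
  suffices g ∈ idealOfVars σ A ^ l from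
    (Submodule.Quotient.mk_eq_zero _).2 (hg ▸ Submodule.mem_map_of_mem this)
  rw [mem_pow_idealOfVars_iff']
  intro c hc
  obtain ⟨i, hi⟩ : ∃ i, c i < a i := by
    by_contra! hac
    exact (hc.trans_le (hlk.trans hak.ge)).not_ge (Finsupp.degree_mono hac)
  obtain ⟨j, hji⟩ := exists_ne i
  exact coeff_eq_zero_of_mk_eq_map_monomial φ hji.symm hak hc hi rfl hg

variable (σ A l) in
/-- The `A`-module `m^l/m^(l+1)`, where `m = idealOfVars σ A`. -/
abbrev GradedPiece : Type _ :=
  ↥((idealOfVars σ A ^ l).restrictScalars A) ⧸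
    Submodule.comap ((idealOfVars σ A ^ l).restrictScalars A).subtype
      ((idealOfVars σ A ^ (l + 1)).restrictScalars A)

namespace GradedPiece

variable (σ A l) in
/-- The canonical `A`-linear map `m^l/m^(l+1) → R/m^(l+1)`. -/
def toQuotient : GradedPiece σ A l →ₗ[A] MvPolynomial σ A ⧸ idealOfVars σ A ^ (l + 1) :=
  Submodule.liftQ _
    ((Ideal.Quotient.mkₐ A (idealOfVars σ A ^ (l + 1))).toLinearMap ∘ₗ
      ((idealOfVars σ A ^ l).restrictScalars A).subtype)
    fun _ hp => Ideal.Quotient.eq_zero_iff_mem.2 hp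

lemma toQuotient_injective : Function.Injective (toQuotient σ A l) := by
  rw [← LinearMap.ker_eq_bot]
  exact Submodule.ker_liftQ_eq_bot _ _ _ fun _ hp => Ideal.Quotient.eq_zero_iff_mem.1 hp

lemma smul_toQuotient (r : MvPolynomial σ A) (q : GradedPiece σ A l) :
    r • toQuotient σ A l q = constantCoeff r • toQuotient σ A l q := by
  obtain ⟨p, rfl⟩ := Submodule.mkQ_surjective _ q
  exact Ideal.Quotient.eq.2 (mul_sub_constantCoeff_smul_mem_pow_idealOfVars r p.2)

variable (σ A l) in
/-- The isomorphism `m^l/m^(l+1) ≅ R_l` sending a class to the degree-`l` component of any of its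
representatives. -/
def equivHomogeneousSubmodule : GradedPiece σ A l ≃ₗ[A] homogeneousSubmodule σ A l :=
  let component : ↥((idealOfVars σ A ^ l).restrictScalars A) →ₗ[A] homogeneousSubmodule σ A l :=
    (homogeneousComponent l).restrict fun p _ => homogeneousComponent_mem l p
  have hker : Submodule.comap ((idealOfVars σ A ^ l).restrictScalars A).subtype
      ((idealOfVars σ A ^ (l + 1)).restrictScalars A) = LinearMap.ker component := by
    ext p
    exact (mem_pow_succ_idealOfVars_iff_homogeneousComponent_eq_zero p.2).trans
      (Submodule.coe_eq_zero (x := component p))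
  have hsurj : Function.Surjective component := fun f =>
    ⟨⟨f, homogeneousSubmodule_le_pow_idealOfVars l f.2⟩,
      Subtype.ext (homogeneousComponent_eq_self f.2)⟩
  (Submodule.quotEquivOfEq _ _ hker).trans (component.quotKerEquivOfSurjective hsurj)

variable (σ A k l) in
/-- The extension of linear maps `R_k → m^l/m^(l+1)` to `m^k` through the degree-`k` component. It
is `R`-linear because `m` annihilates `m^l/m^(l+1)`. -/
def extendHom : (homogeneousSubmodule σ A k →ₗ[A] GradedPiece σ A l) →ₗ[A]
    ↥(idealOfVars σ A ^ k) →ₗ[MvPolynomial σ A] MvPolynomial σ A ⧸ idealOfVars σ A ^ (l + 1) where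
  toFun ψ :=
    { toFun f := toQuotient σ A l (ψ ⟨homogeneousComponent k f, homogeneousComponent_mem k _⟩)
      map_add' f g := by
        rw [← map_add, ← map_add]
        congr 2
        exact Subtype.ext (map_add _ _ _)
      map_smul' r f := by
        rw [RingHom.id_apply, smul_toQuotient, ← map_smul, ← map_smul]
        congr 2
        exact Subtype.ext (homogeneousComponent_mul_of_mem_pow_idealOfVars r f.2) }
  map_add' ψ χ := LinearMap.ext fun f => map_add (toQuotient σ A l) _ _
  map_smul' c ψ := LinearMap.ext fun f => map_smul (toQuotient σ A l) _ _

lemma extendHom_apply_of_mem (ψ : homogeneousSubmodule σ A k →ₗ[A] GradedPiece σ A l)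
    {f : MvPolynomial σ A} (hf : f ∈ homogeneousSubmodule σ A k) (hf' : f ∈ idealOfVars σ A ^ k) :
    extendHom σ A k l ψ ⟨f, hf'⟩ = toQuotient σ A l (ψ ⟨f, hf⟩) :=
  congrArg (fun p => toQuotient σ A l (ψ p)) (Subtype.ext (homogeneousComponent_eq_self hf))

lemma extendHom_injective : Function.Injective (extendHom σ A k l) := by
  intro ψ χ hψχ
  ext1 f
  have hf : (f : MvPolynomial σ A) ∈ idealOfVars σ A ^ k :=
    homogeneousSubmodule_le_pow_idealOfVars k f.2
  apply toQuotient_injective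
  rw [← extendHom_apply_of_mem ψ f.2 hf, hψχ, extendHom_apply_of_mem χ f.2 hf]

lemma extendHom_surjective [Nontrivial σ] (hlk : l ≤ k) :
    Function.Surjective (extendHom σ A k l) := by
  intro φ
  let φk : homogeneousSubmodule σ A k →ₗ[A] MvPolynomial σ A ⧸ idealOfVars σ A ^ (l + 1) :=
    φ.restrictScalars A ∘ₗ Submodule.inclusion (homogeneousSubmodule_le_pow_idealOfVars k)
  have hφk (f) : φk f ∈ LinearMap.range (toQuotient σ A l) := by
    obtain ⟨p, hp, hpf⟩ := range_le_map_mkQ_pow_idealOfVars hlk φ ⟨_, rfl⟩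
    exact ⟨Submodule.Quotient.mk ⟨p, hp⟩, hpf⟩
  let ψ := (LinearEquiv.ofInjective _ toQuotient_injective).symm.toLinearMap ∘ₗ
    φk.codRestrict _ hφk
  refine ⟨ψ, pow_idealOfVars_hom_ext fun a ha hak => ?_⟩
  rw [extendHom_apply_of_mem ψ (isHomogeneous_monomial 1 hak)]
  exact congrArg Subtype.val
    ((LinearEquiv.ofInjective _ toQuotient_injective).apply_symm_apply _)

end GradedPiece

open GradedPiece in
theorem hom_from_power_of_maximal_ideal_general (σ A : Type*) [Nontrivial σ] [CommRing A]
    {k l : ℕ} (hlk : l ≤ k) :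
    (∀ (φ : ↥(idealOfVars σ A ^ k) →ₗ[MvPolynomial σ A]
          MvPolynomial σ A ⧸ idealOfVars σ A ^ (l + 1)) (f : ↥(idealOfVars σ A ^ k)),
      φ f ∈ Submodule.map (Ideal.Quotient.mkₐ A (idealOfVars σ A ^ (l + 1))).toLinearMap
        ((idealOfVars σ A ^ l).restrictScalars A)) ∧
    (∃ e : (↥(idealOfVars σ A ^ k) →ₗ[MvPolynomial σ A]
          MvPolynomial σ A ⧸ idealOfVars σ A ^ (l + 1)) ≃ₗ[A]
        (homogeneousSubmodule σ A k →ₗ[A] GradedPiece σ A l),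
      ∀ φ (f : MvPolynomial σ A) (hf : f ∈ homogeneousSubmodule σ A k)
        (hf' : f ∈ idealOfVars σ A ^ k), toQuotient σ A l (e φ ⟨f, hf⟩) = φ ⟨f, hf'⟩) ∧
    Nonempty (GradedPiece σ A l ≃ₗ[A] homogeneousSubmodule σ A l) ∧
    Nonempty ((↥(idealOfVars σ A ^ k) →ₗ[MvPolynomial σ A]
          MvPolynomial σ A ⧸ idealOfVars σ A ^ (l + 1)) ≃ₗ[A]
        (homogeneousSubmodule σ A k →ₗ[A] homogeneousSubmodule σ A l)) := by
  let extend := LinearEquiv.ofBijective (extendHom σ A k l)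
    ⟨extendHom_injective, extendHom_surjective hlk⟩
  refine ⟨fun φ f => range_le_map_mkQ_pow_idealOfVars hlk φ ⟨f, rfl⟩,
    ⟨extend.symm, fun φ f hf hf' => ?_⟩, ⟨equivHomogeneousSubmodule σ A l⟩,
    ⟨extend.symm.trans (LinearEquiv.congrRight (equivHomogeneousSubmodule σ A l))⟩⟩
  rw [← extendHom_apply_of_mem (extend.symm φ) hf hf']
  exact LinearMap.congr_fun (extend.apply_symm_apply φ) ⟨f, hf'⟩

end PowIdealOfVars

/-- For `n ≥ 2`, `k ≥ 1`: every `R`-module homomorphism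
`φ : m^k → R/m^k` maps homogeneous polynomials of degree `k` into the image of `m^{k-1}`;
restriction to the degree-`k` component defines a ℂ-linear isomorphism
`Hom_R(m^k, R/m^k) ≅ Hom_ℂ(R_k, m^{k-1}/m^k)`; moreover `m^{k-1}/m^k ≅ R_{k-1}`, so that
`Hom_R(m^k, R/m^k) ≅ Hom_ℂ(R_k, R_{k-1})` as ℂ-vector spaces. -/
theorem hom_from_power_of_maximal_ideal (n k : ℕ) (hn : 2 ≤ n) (hk : 1 ≤ k) :
    (∀ (φ : ↥(mId n ^ k) →ₗ[R n] (R n ⧸ mId n ^ k)) (f : ↥(mId n ^ k)),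
      (f : R n) ∈ Rdeg n k →
      φ f ∈ Submodule.map (Ideal.Quotient.mkₐ ℂ (mId n ^ k)).toLinearMap
        ((mId n ^ (k - 1)).restrictScalars ℂ)) ∧
    (∃ e : (↥(mId n ^ k) →ₗ[R n] (R n ⧸ mId n ^ k)) ≃ₗ[ℂ]
        (↥(Rdeg n k) →ₗ[ℂ] Qmod n k),
      ∀ (φ : ↥(mId n ^ k) →ₗ[R n] (R n ⧸ mId n ^ k)) (f : R n)
        (hf : f ∈ Rdeg n k) (hf' : f ∈ mId n ^ k),
        iota n k ((e φ) ⟨f, hf⟩) = φ ⟨f, hf'⟩) ∧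
    Nonempty (Qmod n k ≃ₗ[ℂ] ↥(Rdeg n (k - 1))) ∧
    Nonempty ((↥(mId n ^ k) →ₗ[R n] (R n ⧸ mId n ^ k)) ≃ₗ[ℂ]
      (↥(Rdeg n k) →ₗ[ℂ] ↥(Rdeg n (k - 1)))) := by
  obtain ⟨l, rfl⟩ := Nat.exists_eq_add_of_le' hk
  have : Nontrivial (Fin n) := Fin.nontrivial_iff_two_le.2 hn
  obtain ⟨hmem, hequiv⟩ := hom_from_power_of_maximal_ideal_general (Fin n) ℂ l.le_succ
  exact ⟨fun φ f _ => hmem φ f, hequiv⟩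

end
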